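/- Let A and E be normal n×n complex matrices. Then A + E is normal if and only if for all γ, μ, α ∈ ℂ with γ·conj(μ) ∈ ℝ, the matrix γA + μE + αI is normal. -/

import Mathlib

open Matrix

/-!
For normal `a` and `b` the self-commutator of `a + b` is `c + star c`, where `c = ⁅a, star b⁆`;
so `a + b` is normal exactly when `c` is skew-adjoint. Replacing `a` and `b` by `γ • a` and `μ • b`
multiplies `c` by `γ * star μ`, and self-adjoint scalars preserve skew-adjointness. For the summand
`α • 1` the commutator in question vanishes.
-/

section Commutator

variable {A : Type*} [NonUnitalNonAssocRing A] [StarRing A]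

theorem isStarNormal_iff_lie_star_self_eq_zero {a : A} : IsStarNormal a ↔ ⁅a, star a⁆ = 0 := by
  rw [isStarNormal_iff, Commute.symm_iff, commute_iff_lie_eq]

theorem star_lie (a b : A) : star ⁅a, b⁆ = ⁅star b, star a⁆ := by
  simp only [Ring.lie_def, star_sub, star_mul]

theorem lie_add_star_add (a b : A) :
    ⁅a + b, star (a + b)⁆ = ⁅a, star a⁆ + ⁅b, star b⁆ + (star ⁅a, star b⁆ + ⁅a, star b⁆) := by
  rw [star_lie, star_star]
  simp only [Ring.lie_def, star_add, add_mul, mul_add]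
  abel

theorem isStarNormal_add_iff_lie_star_mem_skewAdjoint {a b : A}
    (ha : IsStarNormal a) (hb : IsStarNormal b) :
    IsStarNormal (a + b) ↔ ⁅a, star b⁆ ∈ skewAdjoint A := by
  rw [isStarNormal_iff_lie_star_self_eq_zero] at ha hb ⊢
  rw [lie_add_star_add, ha, hb, add_zero, zero_add, skewAdjoint.mem_iff, eq_neg_iff_add_eq_zero]

end Commutator

theorem smul_mem_skewAdjoint_of_isSelfAdjoint {R A : Type*} [Star R] [AddCommGroup A]
    [StarAddMonoid A] [DistribSMul R A] [StarModule R A] {r : R} (hr : IsSelfAdjoint r) {x : A}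
    (hx : x ∈ skewAdjoint A) : r • x ∈ skewAdjoint A := by
  rw [skewAdjoint.mem_iff] at hx ⊢
  rw [star_smul, hr.star_eq, hx, smul_neg]

section Scalars

variable {R A : Type*} [CommMonoid R] [Star R] [NonUnitalNonAssocRing A] [StarRing A]
  [DistribMulAction R A] [IsScalarTower R A A] [SMulCommClass R A A] [StarModule R A]

theorem lie_smul_star_smul (γ μ : R) (a b : A) :
    ⁅γ • a, star (μ • b)⁆ = (γ * star μ) • ⁅a, star b⁆ := by
  simp only [Ring.lie_def, star_smul, smul_mul_smul_comm, smul_sub, mul_comm (star μ)]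

theorem isStarNormal_smul_add_smul {a b : A} (ha : IsStarNormal a) (hb : IsStarNormal b)
    (hab : IsStarNormal (a + b)) {γ μ : R} (hγμ : IsSelfAdjoint (γ * star μ)) :
    IsStarNormal (γ • a + μ • b) := by
  rw [isStarNormal_add_iff_lie_star_mem_skewAdjoint ha hb] at hab
  rw [isStarNormal_add_iff_lie_star_mem_skewAdjoint (.smul γ a) (.smul μ b), lie_smul_star_smul]
  exact smul_mem_skewAdjoint_of_isSelfAdjoint hγμ hab

end Scalars

theorem isStarNormal_add_smul_one {R A : Type*} [Star R] [NonAssocRing A] [StarRing A] [SMul R A]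
    [IsScalarTower R A A] [SMulCommClass R A A] [StarModule R A] {a : A} (ha : IsStarNormal a)
    (α : R) : IsStarNormal (a + α • (1 : A)) := by
  have lie_eq_zero : ⁅a, star (α • (1 : A))⁆ = 0 := by
    simp only [Ring.lie_def, star_smul, star_one, mul_smul_comm, smul_mul_assoc, mul_one, one_mul,
      sub_self]
  rw [isStarNormal_add_iff_lie_star_mem_skewAdjoint ha (.smul α 1), lie_eq_zero]
  exact zero_mem _

theorem stmt7_general {R A : Type*} [CommSemiring R] [StarRing R] [NonAssocRing A] [StarRing A]
    [Module R A] [IsScalarTower R A A] [SMulCommClass R A A] [StarModule R A] {a b : A}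
    (ha : IsStarNormal a) (hb : IsStarNormal b) :
    IsStarNormal (a + b) ↔ ∀ γ μ α : R, IsSelfAdjoint (γ * star μ) →
      IsStarNormal (γ • a + μ • b + α • (1 : A)) := by
  constructor
  · intro hab γ μ α hγμ
    exact isStarNormal_add_smul_one (isStarNormal_smul_add_smul ha hb hab hγμ) α
  · intro h
    simpa using h 1 1 0 (by simp)

theorem isStarNormal_iff_mul_conjTranspose {n α : Type*} [Fintype n] [NonUnitalNonAssocSemiring α]
    [StarRing α] {M : Matrix n n α} : IsStarNormal M ↔ M * Mᴴ = Mᴴ * M := by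
  rw [isStarNormal_iff, Commute.symm_iff, commute_iff_eq, star_eq_conjTranspose]

theorem isSelfAdjoint_iff_im_eq_zero {z : ℂ} : IsSelfAdjoint z ↔ z.im = 0 :=
  Complex.conj_eq_iff_im

/-- Let `A` and `E` be normal `n × n` complex matrices.  Then `A + E` is
normal iff for all `γ, μ, α ∈ ℂ` with `γ · conj μ ∈ ℝ`, the matrix `γA + μE + αI` is normal. -/
theorem stmt7 (n : ℕ) (A E : Matrix (Fin n) (Fin n) ℂ)
    (hA : A * Aᴴ = Aᴴ * A) (hE : E * Eᴴ = Eᴴ * E) :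
    (A + E) * (A + E)ᴴ = (A + E)ᴴ * (A + E) ↔
      ∀ γ μ α : ℂ, (γ * star μ).im = 0 →
        (γ • A + μ • E + α • (1 : Matrix (Fin n) (Fin n) ℂ))
            * (γ • A + μ • E + α • (1 : Matrix (Fin n) (Fin n) ℂ))ᴴ
          = (γ • A + μ • E + α • (1 : Matrix (Fin n) (Fin n) ℂ))ᴴ
            * (γ • A + μ • E + α • (1 : Matrix (Fin n) (Fin n) ℂ)) := by
  simp_rw [← isStarNormal_iff_mul_conjTranspose, ← isSelfAdjoint_iff_im_eq_zero] at hA hE ⊢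
  exact stmt7_general hA hE
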